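/- arXiv:1310.4123 — 2 statements merged into one kernel-verified Lean document; each statement's English description precedes it below -/
import Mathlib

section
/- Upwards Induction Theorem (abstract diagram form of the paper's Theorem 'Upwards Induction'). Fix n ∈ ℤ. Assume that the comparison maps φ : K_n → K̄_n and φ : K_{n+1} → K̄_{n+1} are isomorphisms, and that for both ε = 1 and ε = −1 the comparison maps φ : KQ_n^ε → KQ̄_n^ε and the induced maps on Witt groups W_{n+1}^ε → W̄_{n+1}^ε are isomorphisms. Then for both ε = 1 and ε = −1 the comparison maps U_n^ε → Ū_n^ε, V_n^ε → V̄_n^ε, U_{n+1}^ε → Ū_{n+1}^ε, V_{n−1}^ε → V̄_{n−1}^ε, KQ_{n+1}^ε → KQ̄_{n+1}^ε, and the induced maps W_{n+2}^ε → W̄_{n+2}^ε are all isomorphisms. -/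
/-- The map induced by a commuting square on the cokernels of the vertical maps
(used for the Witt groups `W = coker H`). -/
def wittMap {C C' G G' : Type} [AddCommGroup C] [AddCommGroup C']
    [AddCommGroup G] [AddCommGroup G']
    (H : C →+ G) (H' : C' →+ G') (φC : C →+ C') (φG : G →+ G')
    (hcomm : ∀ x : C, φG (H x) = H' (φC x)) :
    G ⧸ H.range →+ G' ⧸ H'.range :=
  QuotientAddGroup.map _ _ φG (by
    rintro g ⟨c, rfl⟩
    exact ⟨φC c, (hcomm c).symm⟩)

/-!
Exactness embeds the Witt group `W ε (m + 1) = coker (H ε (m + 1))` into `U ε m`, as the kernel of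
`U ε m → K m`. In the exact row `0 → W ε (n + 1) → U ε n → K n → KQ ε n` the five lemma therefore
gives bijectivity on `U ε n`. The Witt group hypothesis also makes the comparison surjective on
`KQ ε (n + 1)`, and this is all that the five lemma on the forgetful sequence requires in that
degree to give bijectivity on `V ε n`. The Fundamental Theorem passes from `V ε n` to
`U (!ε) (n + 1)` and from `U ε n` to `V (!ε) (n - 1)`, so both signs have to be treated at once.
Knowing `U ε (n + 1)`, one reads off `KQ ε (n + 1)` and `W ε (n + 2)` from the hyperbolic sequence.
-/

section Cokernel

variable {E B F G : Type*} [AddCommGroup E] [AddCommGroup B] [AddCommGroup F] [AddCommGroup G]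
  {p : E →+ B} {δ : B →+ F} {i : F →+ G}

/-- For `E → B → F` exact at `B`, the map `coker (E → B) → F` induced by `B → F`. -/
def cokerLift (hpδ : Function.Exact p δ) : B ⧸ p.range →+ F :=
  QuotientAddGroup.lift p.range δ hpδ.addMonoidHom_ker_eq.ge

lemma cokerLift_injective (hpδ : Function.Exact p δ) : Function.Injective (cokerLift hpδ) :=
  (QuotientAddGroup.injective_lift_iff _ _ _).2 hpδ.addMonoidHom_ker_eq.symm

lemma exact_zero_cokerLift (hpδ : Function.Exact p δ) :
    Function.Exact (0 : Unit →+ B ⧸ p.range) (cokerLift hpδ) :=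
  (LinearMap.exact_zero_iff_injective Unit (cokerLift hpδ).toIntLinearMap).2
    (cokerLift_injective hpδ)

lemma exact_cokerLift (hpδ : Function.Exact p δ) (hδi : Function.Exact δ i) :
    Function.Exact (cokerLift hpδ) i := fun y =>
  (hδi y).trans (QuotientAddGroup.mk_surjective.exists (p := (cokerLift hpδ · = y))).symm

end Cokernel

lemma surjective_of_surjective_quotientMap {G G' : Type*} [AddGroup G] [AddGroup G']
    {N : AddSubgroup G} [N.Normal] {N' : AddSubgroup G'} [N'.Normal] {f : G →+ G'}
    (hN : N ≤ N'.comap f) (hN' : N' ≤ f.range)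
    (hf : Function.Surjective (QuotientAddGroup.map N N' f hN)) : Function.Surjective f := by
  intro y
  obtain ⟨q, hq⟩ := hf y
  obtain ⟨x, rfl⟩ := QuotientAddGroup.mk_surjective q
  have hdiff : -f x + y ∈ f.range := hN' (QuotientAddGroup.eq.1 hq)
  simpa using f.range.add_mem ⟨x, rfl⟩ hdiff

lemma bijective_iff_of_equiv_comm {α β α' β' : Type*} (e : α ≃ β) (e' : α' ≃ β')
    {f : α → α'} {g : β → β'} (h : ∀ x, g (e x) = e' (f x)) :
    Function.Bijective g ↔ Function.Bijective f := by
  rw [← e.bijective_comp, show g ∘ e = e' ∘ f from funext h, e'.comp_bijective]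

section Ladder

variable {F E B F' E' B' : ℤ → Type*}
  [∀ n, AddCommGroup (F n)] [∀ n, AddCommGroup (E n)] [∀ n, AddCommGroup (B n)]
  [∀ n, AddCommGroup (F' n)] [∀ n, AddCommGroup (E' n)] [∀ n, AddCommGroup (B' n)]

/-- The sequence `⋯ → F n → E n → B n → F (n - 1) → ⋯` is exact, as is the long exact sequence of
homotopy groups of a fibration with fiber `F`, total space `E` and base `B`. -/
structure IsLongExact (i : ∀ n, F n →+ E n) (p : ∀ n, E n →+ B n)
    (δ : ∀ n, B n →+ F (n - 1)) : Prop where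
  exact_total : ∀ n, Function.Exact (i n) (p n)
  exact_base : ∀ n, Function.Exact (p n) (δ n)
  exact_fiber : ∀ n, Function.Exact (δ n) (i (n - 1))

/-- `φF`, `φE`, `φB` form a morphism between two long exact sequences. -/
structure IsLongExactLadder (i : ∀ n, F n →+ E n) (p : ∀ n, E n →+ B n)
    (δ : ∀ n, B n →+ F (n - 1)) (i' : ∀ n, F' n →+ E' n) (p' : ∀ n, E' n →+ B' n)
    (δ' : ∀ n, B' n →+ F' (n - 1)) (φF : ∀ n, F n →+ F' n) (φE : ∀ n, E n →+ E' n)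
    (φB : ∀ n, B n →+ B' n) : Prop where
  source : IsLongExact i p δ
  target : IsLongExact i' p' δ'
  comm_i : ∀ n x, φE n (i n x) = i' n (φF n x)
  comm_p : ∀ n x, φB n (p n x) = p' n (φE n x)
  comm_δ : ∀ n x, φF (n - 1) (δ n x) = δ' n (φB n x)

namespace IsLongExactLadder

variable {i : ∀ n, F n →+ E n} {p : ∀ n, E n →+ B n} {δ : ∀ n, B n →+ F (n - 1)}
  {i' : ∀ n, F' n →+ E' n} {p' : ∀ n, E' n →+ B' n} {δ' : ∀ n, B' n →+ F' (n - 1)}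
  {φF : ∀ n, F n →+ F' n} {φE : ∀ n, E n →+ E' n} {φB : ∀ n, B n →+ B' n}
  (L : IsLongExactLadder i p δ i' p' δ' φF φE φB) {m n : ℤ}
include L

lemma comp_i (n : ℤ) : (i' n).comp (φF n) = (φE n).comp (i n) :=
  AddMonoidHom.ext fun x => (L.comm_i n x).symm

lemma comp_p (n : ℤ) : (p' n).comp (φE n) = (φB n).comp (p n) :=
  AddMonoidHom.ext fun x => (L.comm_p n x).symm

lemma comp_δ (n : ℤ) : (δ' n).comp (φB n) = (φF (n - 1)).comp (δ n) :=
  AddMonoidHom.ext fun x => (L.comm_δ n x).symm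

lemma range_p_le_comap (n : ℤ) : (p n).range ≤ (p' n).range.comap (φB n) := by
  rintro _ ⟨x, rfl⟩
  exact ⟨φE n x, (L.comm_p n x).symm⟩

/-- The map `coker (p n) → coker (p' n)` induced by the ladder. For the hyperbolic maps it is, by
definition, the map `wittMap` of Witt groups, but here the groups may live in any universe. -/
def cokerMap (n : ℤ) : B n ⧸ (p n).range →+ B' n ⧸ (p' n).range :=
  QuotientAddGroup.map _ _ (φB n) (L.range_p_le_comap n)

lemma cokerLift_comp_cokerMap (n : ℤ) :
    (cokerLift (L.target.exact_base n)).comp (L.cokerMap n) =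
      (φF (n - 1)).comp (cokerLift (L.source.exact_base n)) :=
  QuotientAddGroup.addMonoidHom_ext _ (L.comp_δ n)

lemma bijective_fiber (hmn : n - 1 = m)
    (hEn : Function.Surjective (φE n)) (hBn : Function.Bijective (φB n))
    (hEm : Function.Bijective (φE m)) (hBm : Function.Injective (φB m)) :
    Function.Bijective (φF m) := by
  subst hmn
  exact AddMonoidHom.bijective_of_surjective_of_bijective_of_bijective_of_injective
    _ _ _ _ _ _ _ _ _ _ _ _ _ (L.comp_p n) (L.comp_δ n) (L.comp_i _) (L.comp_p _)
    (L.source.exact_base n) (L.source.exact_fiber n) (L.source.exact_total _)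
    (L.target.exact_base n) (L.target.exact_fiber n) (L.target.exact_total _) hEn hBn hEm hBm

lemma bijective_base (hmn : n - 1 = m)
    (hFn : Function.Surjective (φF n)) (hEn : Function.Bijective (φE n))
    (hFm : Function.Bijective (φF m)) (hEm : Function.Injective (φE m)) :
    Function.Bijective (φB n) := by
  subst hmn
  exact AddMonoidHom.bijective_of_surjective_of_bijective_of_bijective_of_injective
    _ _ _ _ _ _ _ _ _ _ _ _ _ (L.comp_i n) (L.comp_p n) (L.comp_δ n) (L.comp_i _)
    (L.source.exact_total n) (L.source.exact_base n) (L.source.exact_fiber n)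
    (L.target.exact_total n) (L.target.exact_base n) (L.target.exact_fiber n) hFn hEn hFm hEm

lemma surjective_base_of_cokerMap (hE : Function.Surjective (φE n))
    (hcoker : Function.Surjective (L.cokerMap n)) : Function.Surjective (φB n) := by
  refine surjective_of_surjective_quotientMap (L.range_p_le_comap n) ?_ hcoker
  rintro _ ⟨y, rfl⟩
  obtain ⟨x, rfl⟩ := hE y
  exact ⟨p n x, L.comm_p n x⟩

lemma bijective_fiber_of_cokerMap (hmn : n - 1 = m)
    (hcoker : Function.Bijective (L.cokerMap n)) (hE : Function.Bijective (φE m))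
    (hB : Function.Injective (φB m)) : Function.Bijective (φF m) := by
  subst hmn
  exact AddMonoidHom.bijective_of_surjective_of_bijective_of_bijective_of_injective
    0 _ _ _ 0 _ _ _ (.id Unit) _ _ _ _ (by simp) (L.cokerLift_comp_cokerMap n)
    (L.comp_i _) (L.comp_p _)
    (exact_zero_cokerLift _)
    (exact_cokerLift _ (L.source.exact_fiber n)) (L.source.exact_total _)
    (exact_zero_cokerLift _)
    (exact_cokerLift _ (L.target.exact_fiber n)) (L.target.exact_total _)
    Function.surjective_id hcoker hE hB

lemma bijective_cokerMap (hmn : n - 1 = m) (hF : Function.Bijective (φF m))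
    (hE : Function.Injective (φE m)) : Function.Bijective (L.cokerMap n) := by
  subst hmn
  exact AddMonoidHom.bijective_of_bijective_of_injective_of_left_exact
    _ _ _ _ _ _ _ (L.cokerLift_comp_cokerMap n) (L.comp_i _)
    (exact_cokerLift _ (L.source.exact_fiber n)) (exact_cokerLift _ (L.target.exact_fiber n))
    hF hE (cokerLift_injective _) (cokerLift_injective _)

end IsLongExactLadder

end Ladder

/-- **Upwards Induction Theorem** (abstract diagram form).  Here `ε` ranges over
`Bool`, `!ε` playing the role of `-ε`; `K`, `KQ`, `V`, `U` (resp. their primed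
versions) are the two systems, `F`/`H` the forgetful/hyperbolic maps, `a, d`
(resp. `b, e`) the remaining maps of the exact sequence of the fibration of the
forgetful (resp. hyperbolic) map, `φK, φKQ, φV, φU` the comparison maps, and
`ψ, ψ'` the isomorphisms of the Fundamental Theorem of Hermitian K-theory. -/
theorem upwards_induction
    (K : ℤ → Type) (KQ V U : Bool → ℤ → Type)
    (K' : ℤ → Type) (KQ' V' U' : Bool → ℤ → Type)
    [∀ n, AddCommGroup (K n)] [∀ ε n, AddCommGroup (KQ ε n)]
    [∀ ε n, AddCommGroup (V ε n)] [∀ ε n, AddCommGroup (U ε n)]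
    [∀ n, AddCommGroup (K' n)] [∀ ε n, AddCommGroup (KQ' ε n)]
    [∀ ε n, AddCommGroup (V' ε n)] [∀ ε n, AddCommGroup (U' ε n)]
    (F : ∀ ε n, KQ ε n →+ K n) (H : ∀ ε n, K n →+ KQ ε n)
    (a : ∀ ε n, V ε n →+ KQ ε n) (d : ∀ ε n, K n →+ V ε (n - 1))
    (b : ∀ ε n, U ε n →+ K n) (e : ∀ ε n, KQ ε n →+ U ε (n - 1))
    (F' : ∀ ε n, KQ' ε n →+ K' n) (H' : ∀ ε n, K' n →+ KQ' ε n)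
    (a' : ∀ ε n, V' ε n →+ KQ' ε n) (d' : ∀ ε n, K' n →+ V' ε (n - 1))
    (b' : ∀ ε n, U' ε n →+ K' n) (e' : ∀ ε n, KQ' ε n →+ U' ε (n - 1))
    -- exactness of the two long sequences of the first system
    (exVKQ : ∀ ε n, Function.Exact ⇑(a ε n) ⇑(F ε n))
    (exVK : ∀ ε n, Function.Exact ⇑(F ε n) ⇑(d ε n))
    (exVV : ∀ ε n, Function.Exact ⇑(d ε n) ⇑(a ε (n - 1)))
    (exUK : ∀ ε n, Function.Exact ⇑(b ε n) ⇑(H ε n))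
    (exUKQ : ∀ ε n, Function.Exact ⇑(H ε n) ⇑(e ε n))
    (exUU : ∀ ε n, Function.Exact ⇑(e ε n) ⇑(b ε (n - 1)))
    -- exactness of the two long sequences of the second system
    (exVKQ' : ∀ ε n, Function.Exact ⇑(a' ε n) ⇑(F' ε n))
    (exVK' : ∀ ε n, Function.Exact ⇑(F' ε n) ⇑(d' ε n))
    (exVV' : ∀ ε n, Function.Exact ⇑(d' ε n) ⇑(a' ε (n - 1)))
    (exUK' : ∀ ε n, Function.Exact ⇑(b' ε n) ⇑(H' ε n))
    (exUKQ' : ∀ ε n, Function.Exact ⇑(H' ε n) ⇑(e' ε n))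
    (exUU' : ∀ ε n, Function.Exact ⇑(e' ε n) ⇑(b' ε (n - 1)))
    -- comparison maps, commuting with all structure maps
    (φK : ∀ n, K n →+ K' n) (φKQ : ∀ ε n, KQ ε n →+ KQ' ε n)
    (φV : ∀ ε n, V ε n →+ V' ε n) (φU : ∀ ε n, U ε n →+ U' ε n)
    (hφF : ∀ ε n x, φK n (F ε n x) = F' ε n (φKQ ε n x))
    (hφH : ∀ ε n x, φKQ ε n (H ε n x) = H' ε n (φK n x))
    (hφa : ∀ ε n x, φKQ ε n (a ε n x) = a' ε n (φV ε n x))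
    (hφd : ∀ ε n x, φV ε (n - 1) (d ε n x) = d' ε n (φK n x))
    (hφb : ∀ ε n x, φK n (b ε n x) = b' ε n (φU ε n x))
    (hφe : ∀ ε n x, φU ε (n - 1) (e ε n x) = e' ε n (φKQ ε n x))
    -- the Fundamental Theorem of Hermitian K-theory in both systems
    (ψ : ∀ ε n, V ε n ≃+ U (!ε) (n + 1))
    (ψ' : ∀ ε n, V' ε n ≃+ U' (!ε) (n + 1))
    (hψ : ∀ ε n x, φU (!ε) (n + 1) (ψ ε n x) = ψ' ε n (φV ε n x))
    -- hypotheses of the theorem, for a fixed `n`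
    (n : ℤ)
    (hK : Function.Bijective (φK n))
    (hK1 : Function.Bijective (φK (n + 1)))
    (hKQ : ∀ ε, Function.Bijective (φKQ ε n))
    (hW1 : ∀ ε, Function.Bijective
      (wittMap (H ε (n + 1)) (H' ε (n + 1)) (φK (n + 1)) (φKQ ε (n + 1))
        (hφH ε (n + 1)))) :
    ∀ ε,
      Function.Bijective (φU ε n) ∧
      Function.Bijective (φV ε n) ∧
      Function.Bijective (φU ε (n + 1)) ∧
      Function.Bijective (φV ε (n - 1)) ∧
      Function.Bijective (φKQ ε (n + 1)) ∧
      Function.Bijective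
        (wittMap (H ε (n + 2)) (H' ε (n + 2)) (φK (n + 2)) (φKQ ε (n + 2))
          (hφH ε (n + 2))) := by
  have forgetful (ε) :
      IsLongExactLadder (a ε) (F ε) (d ε) (a' ε) (F' ε) (d' ε) (φV ε) (φKQ ε) φK :=
    ⟨⟨exVKQ ε, exVK ε, exVV ε⟩, ⟨exVKQ' ε, exVK' ε, exVV' ε⟩, hφa ε, hφF ε, hφd ε⟩
  have hyperbolic (ε) :
      IsLongExactLadder (b ε) (H ε) (e ε) (b' ε) (H' ε) (e' ε) (φU ε) φK (φKQ ε) :=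
    ⟨⟨exUK ε, exUKQ ε, exUU ε⟩, ⟨exUK' ε, exUKQ' ε, exUU' ε⟩, hφb ε, hφH ε, hφe ε⟩
  have fundamental (ε) {k m : ℤ} (hkm : m + 1 = k) :
      Function.Bijective (φU (!ε) k) ↔ Function.Bijective (φV ε m) := by
    subst hkm
    exact bijective_iff_of_equiv_comm (ψ ε m).toEquiv (ψ' ε m).toEquiv (hψ ε m)
  have hn : n + 1 - 1 = n := by ring
  have hU (ε) : Function.Bijective (φU ε n) :=
    (hyperbolic ε).bijective_fiber_of_cokerMap hn (hW1 ε) hK (hKQ ε).1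
  have hKQ1 (ε) : Function.Surjective (φKQ ε (n + 1)) :=
    (hyperbolic ε).surjective_base_of_cokerMap hK1.2 (hW1 ε).2
  have hV (ε) : Function.Bijective (φV ε n) :=
    (forgetful ε).bijective_fiber hn (hKQ1 ε) hK1 (hKQ ε) hK.1
  have hU1 (ε) : Function.Bijective (φU ε (n + 1)) :=
    Bool.not_not ε ▸ (fundamental (!ε) rfl).2 (hV _)
  exact fun ε => ⟨hU ε, hV ε, hU1 ε, (fundamental ε (by ring)).1 (hU _),
    (hyperbolic ε).bijective_base hn (hU1 ε).2 hK1 (hU ε) hK.1,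
    (hyperbolic ε).bijective_cokerMap (by ring) (hU1 ε) hK1.1⟩
end

section
/- Corollary to the Upwards Induction Theorem (abstract form). Let l ∈ ℤ. Assume that φ : KQ_l^ε → KQ̄_l^ε and φ : KQ_{l+1}^ε → KQ̄_{l+1}^ε are isomorphisms for both ε = 1 and ε = −1, and that φ : K_n → K̄_n is an isomorphism for every n ≥ l. Then for every n ≥ l and both ε = 1 and ε = −1, the comparison maps φ : KQ_n^ε → KQ̄_n^ε, φ : V_n^ε → V̄_n^ε, and φ : U_n^ε → Ū_n^ε are isomorphisms. -/
/-!
The five lemma, applied along the two long exact sequences, carries isomorphisms between nearby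
degrees, and the Fundamental Theorem `Vₙ^ε ≅ Uₙ₊₁^(-ε)` is what raises the degree.  Suppose the
comparison maps on `KQₙ` and `KQₙ₊₁` are isomorphisms for all signs.  Then so are those on `Vₙ`,
hence those on `Uₙ₊₁`.  To reach `KQₙ₊₂` by the five lemma one also needs `Uₙ₊₂`, that is `Vₙ₊₁`,
which seems to depend on `KQₙ₊₂` again.  The circle is broken because `Vₙ₊₁` only needs the
*surjectivity* of the comparison on `KQₙ₊₂`, and the four lemma gives this from `Uₙ₊₁` and the
isomorphisms on `K`.
-/

open Function

/-- A long exact sequence `⋯ → Aₙ → Bₙ → Cₙ → Aₙ₋₁ → ⋯` of abelian groups, such as the homotopy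
sequence of a map `B → C` with fibre `A`. -/
structure LongExactSequence (A B C : ℤ → Type*) [∀ n, AddCommGroup (A n)]
    [∀ n, AddCommGroup (B n)] [∀ n, AddCommGroup (C n)] where
  f : ∀ n, A n →+ B n
  g : ∀ n, B n →+ C n
  δ : ∀ n, C n →+ A (n - 1)
  exact_f_g : ∀ n, Exact (f n) (g n)
  exact_g_δ : ∀ n, Exact (g n) (δ n)
  exact_δ_f : ∀ n, Exact (δ n) (f (n - 1))

namespace LongExactSequence

variable {A B C A' B' C' : ℤ → Type*}
  [∀ n, AddCommGroup (A n)] [∀ n, AddCommGroup (B n)] [∀ n, AddCommGroup (C n)]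
  [∀ n, AddCommGroup (A' n)] [∀ n, AddCommGroup (B' n)] [∀ n, AddCommGroup (C' n)]

/-- The families `φA`, `φB`, `φC` form a morphism of long exact sequences.  This is a predicate on
the three families because the two sequences of Hermitian K-theory share two of them. -/
structure IsHom (S : LongExactSequence A B C) (S' : LongExactSequence A' B' C')
    (φA : ∀ n, A n →+ A' n) (φB : ∀ n, B n →+ B' n) (φC : ∀ n, C n →+ C' n) : Prop where
  comm_f : ∀ n, (S'.f n).comp (φA n) = (φB n).comp (S.f n)
  comm_g : ∀ n, (S'.g n).comp (φB n) = (φC n).comp (S.g n)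
  comm_δ : ∀ n, (S'.δ n).comp (φC n) = (φA (n - 1)).comp (S.δ n)

namespace IsHom

variable {S : LongExactSequence A B C} {S' : LongExactSequence A' B' C'}
  {φA : ∀ n, A n →+ A' n} {φB : ∀ n, B n →+ B' n} {φC : ∀ n, C n →+ C' n}

theorem bijective_left (h : IsHom S S' φA φB φC) {n : ℤ}
    (hB₁ : Surjective (φB (n + 1))) (hC₁ : Bijective (φC (n + 1)))
    (hB : Bijective (φB n)) (hC : Injective (φC n)) : Bijective (φA n) := by
  obtain ⟨m, rfl⟩ : ∃ m, n = m - 1 := ⟨n + 1, (add_sub_cancel_right n 1).symm⟩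
  rw [sub_add_cancel] at hB₁ hC₁
  exact AddMonoidHom.bijective_of_surjective_of_bijective_of_bijective_of_injective
    _ _ _ _ _ _ _ _ _ _ _ _ _
    (h.comm_g m) (h.comm_δ m) (h.comm_f (m - 1)) (h.comm_g (m - 1))
    (S.exact_g_δ m) (S.exact_δ_f m) (S.exact_f_g (m - 1))
    (S'.exact_g_δ m) (S'.exact_δ_f m) (S'.exact_f_g (m - 1)) hB₁ hC₁ hB hC

theorem surjective_right (h : IsHom S S' φA φB φC) {n : ℤ}
    (hB₁ : Surjective (φB (n + 1))) (hA : Surjective (φA n)) (hB : Injective (φB n)) :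
    Surjective (φC (n + 1)) := by
  obtain ⟨m, rfl⟩ : ∃ m, n = m - 1 := ⟨n + 1, (add_sub_cancel_right n 1).symm⟩
  rw [sub_add_cancel] at hB₁ ⊢
  exact AddMonoidHom.surjective_of_surjective_of_surjective_of_injective
    _ _ _ _ _ _ _ _ _ _
    (h.comm_g m) (h.comm_δ m) (h.comm_f (m - 1))
    (S.exact_δ_f m) (S'.exact_g_δ m) (S'.exact_δ_f m) hB₁ hA hB

theorem bijective_right (h : IsHom S S' φA φB φC) {n : ℤ}
    (hA₁ : Surjective (φA (n + 1))) (hB₁ : Bijective (φB (n + 1)))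
    (hA : Bijective (φA n)) (hB : Injective (φB n)) : Bijective (φC (n + 1)) := by
  obtain ⟨m, rfl⟩ : ∃ m, n = m - 1 := ⟨n + 1, (add_sub_cancel_right n 1).symm⟩
  rw [sub_add_cancel] at hA₁ hB₁ ⊢
  exact AddMonoidHom.bijective_of_surjective_of_bijective_of_bijective_of_injective
    _ _ _ _ _ _ _ _ _ _ _ _ _
    (h.comm_f m) (h.comm_g m) (h.comm_δ m) (h.comm_f (m - 1))
    (S.exact_f_g m) (S.exact_g_δ m) (S.exact_δ_f m)
    (S'.exact_f_g m) (S'.exact_g_δ m) (S'.exact_δ_f m) hA₁ hB₁ hA hB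

end IsHom

end LongExactSequence

/-- The groups of Hermitian K-theory: the long exact sequences of the forgetful maps `KQ → K`, with
fibre `V`, and of the hyperbolic maps `K → KQ`, with fibre `U`, linked by the Fundamental Theorem.
The signs form an arbitrary type, on which `neg` plays the role of `ε ↦ -ε`. -/
structure HermitianSystem {Sign : Type*} (neg : Sign → Sign)
    (K : ℤ → Type*) (KQ V U : Sign → ℤ → Type*)
    [∀ n, AddCommGroup (K n)] [∀ ε n, AddCommGroup (KQ ε n)]
    [∀ ε n, AddCommGroup (V ε n)] [∀ ε n, AddCommGroup (U ε n)] where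
  forgetful : ∀ ε, LongExactSequence (V ε) (KQ ε) K
  hyperbolic : ∀ ε, LongExactSequence (U ε) K (KQ ε)
  fundamental : ∀ ε n, V ε n ≃+ U (neg ε) (n + 1)

namespace HermitianSystem

variable {Sign : Type*} {neg : Sign → Sign}
  {K K' : ℤ → Type*} {KQ V U KQ' V' U' : Sign → ℤ → Type*}
  [∀ n, AddCommGroup (K n)] [∀ ε n, AddCommGroup (KQ ε n)]
  [∀ ε n, AddCommGroup (V ε n)] [∀ ε n, AddCommGroup (U ε n)]
  [∀ n, AddCommGroup (K' n)] [∀ ε n, AddCommGroup (KQ' ε n)]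
  [∀ ε n, AddCommGroup (V' ε n)] [∀ ε n, AddCommGroup (U' ε n)]

/-- The families `φK`, `φKQ`, `φV`, `φU` commute with all the structure maps of two Hermitian
systems, i.e. they are the comparison maps induced by a morphism. -/
structure IsHom (S : HermitianSystem neg K KQ V U) (S' : HermitianSystem neg K' KQ' V' U')
    (φK : ∀ n, K n →+ K' n) (φKQ : ∀ ε n, KQ ε n →+ KQ' ε n)
    (φV : ∀ ε n, V ε n →+ V' ε n) (φU : ∀ ε n, U ε n →+ U' ε n) : Prop where
  forgetful : ∀ ε, (S.forgetful ε).IsHom (S'.forgetful ε) (φV ε) (φKQ ε) φK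
  hyperbolic : ∀ ε, (S.hyperbolic ε).IsHom (S'.hyperbolic ε) (φU ε) φK (φKQ ε)
  fundamental : ∀ ε n x,
    φU (neg ε) (n + 1) (S.fundamental ε n x) = S'.fundamental ε n (φV ε n x)

namespace IsHom

variable {S : HermitianSystem neg K KQ V U} {S' : HermitianSystem neg K' KQ' V' U'}
  {φK : ∀ n, K n →+ K' n} {φKQ : ∀ ε n, KQ ε n →+ KQ' ε n}
  {φV : ∀ ε n, V ε n →+ V' ε n} {φU : ∀ ε n, U ε n →+ U' ε n}

theorem bijective_U_neg (h : IsHom S S' φK φKQ φV φU) {ε : Sign} {n : ℤ}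
    (hV : Bijective (φV ε n)) : Bijective (φU (neg ε) (n + 1)) := by
  have square : φU (neg ε) (n + 1) ∘ S.fundamental ε n = S'.fundamental ε n ∘ φV ε n :=
    funext (h.fundamental ε n)
  rw [← EquivLike.bijective_comp (S.fundamental ε n), square]
  exact (S'.fundamental ε n).bijective.comp hV

theorem bijective_KQ_add_two (h : IsHom S S' φK φKQ φV φU) (hneg : Surjective neg) {n : ℤ}
    (hK : Injective (φK n)) (hK₁ : Bijective (φK (n + 1))) (hK₂ : Bijective (φK (n + 1 + 1)))
    (hKQ : ∀ ε, Bijective (φKQ ε n)) (hKQ₁ : ∀ ε, Bijective (φKQ ε (n + 1))) (ε : Sign) :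
    Bijective (φKQ ε (n + 1 + 1)) := by
  have hU₁ : ∀ ε, Bijective (φU ε (n + 1)) := hneg.forall.2 fun ε =>
    h.bijective_U_neg ((h.forgetful ε).bijective_left (hKQ₁ ε).surjective hK₁ (hKQ ε) hK)
  have hKQ₂ : ∀ ε, Surjective (φKQ ε (n + 1 + 1)) := fun ε =>
    (h.hyperbolic ε).surjective_right hK₂.surjective (hU₁ ε).surjective hK₁.injective
  have hU₂ : ∀ ε, Bijective (φU ε (n + 1 + 1)) := hneg.forall.2 fun ε =>
    h.bijective_U_neg ((h.forgetful ε).bijective_left (hKQ₂ ε) hK₂ (hKQ₁ ε) hK₁.injective)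
  exact (h.hyperbolic ε).bijective_right (hU₂ ε).surjective hK₂ (hU₁ ε) hK₁.injective

theorem bijective_KQ_of_le (h : IsHom S S' φK φKQ φV φU) (hneg : Surjective neg) {l : ℤ}
    (hKQl : ∀ ε, Bijective (φKQ ε l)) (hKQl1 : ∀ ε, Bijective (φKQ ε (l + 1)))
    (hK : ∀ n, l ≤ n → Bijective (φK n)) {n : ℤ} (hn : l ≤ n) (ε : Sign) :
    Bijective (φKQ ε n) := by
  suffices consecutive :
      (∀ ε, Bijective (φKQ ε n)) ∧ ∀ ε, Bijective (φKQ ε (n + 1)) from consecutive.1 ε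
  induction n, hn using Int.leInduction with
  | base => exact ⟨hKQl, hKQl1⟩
  | succ n hn ih =>
    exact ⟨ih.2, h.bijective_KQ_add_two hneg (hK n hn).injective (hK _ (by lia))
      (hK _ (by lia)) ih.1 ih.2⟩

end IsHom

end HermitianSystem

theorem upwards_induction_corollary_general {Sign : Type*} {neg : Sign → Sign}
    {K K' : ℤ → Type*} {KQ V U KQ' V' U' : Sign → ℤ → Type*}
    [∀ n, AddCommGroup (K n)] [∀ ε n, AddCommGroup (KQ ε n)]
    [∀ ε n, AddCommGroup (V ε n)] [∀ ε n, AddCommGroup (U ε n)]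
    [∀ n, AddCommGroup (K' n)] [∀ ε n, AddCommGroup (KQ' ε n)]
    [∀ ε n, AddCommGroup (V' ε n)] [∀ ε n, AddCommGroup (U' ε n)]
    {S : HermitianSystem neg K KQ V U} {S' : HermitianSystem neg K' KQ' V' U'}
    {φK : ∀ n, K n →+ K' n} {φKQ : ∀ ε n, KQ ε n →+ KQ' ε n}
    {φV : ∀ ε n, V ε n →+ V' ε n} {φU : ∀ ε n, U ε n →+ U' ε n}
    (h : S.IsHom S' φK φKQ φV φU) (hneg : Surjective neg) (l : ℤ)
    (hKQl : ∀ ε, Bijective (φKQ ε l)) (hKQl1 : ∀ ε, Bijective (φKQ ε (l + 1)))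
    (hK : ∀ n, l ≤ n → Bijective (φK n)) (n : ℤ) (hn : l ≤ n) (ε : Sign) :
    Bijective (φKQ ε n) ∧ Bijective (φV ε n) ∧ Bijective (φU ε n) := by
  have hn₁ : l ≤ n + 1 := by lia
  have hKQ : Bijective (φKQ ε n) := h.bijective_KQ_of_le hneg hKQl hKQl1 hK hn ε
  have hKQ₁ : Bijective (φKQ ε (n + 1)) := h.bijective_KQ_of_le hneg hKQl hKQl1 hK hn₁ ε
  exact ⟨hKQ,
    (h.forgetful ε).bijective_left hKQ₁.surjective (hK _ hn₁) hKQ (hK n hn).injective,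
    (h.hyperbolic ε).bijective_left (hK _ hn₁).surjective hKQ₁ (hK n hn) hKQ.injective⟩

/-- **Corollary to the Upwards Induction Theorem** (abstract form).  Here `ε`
ranges over `Bool`, `!ε` playing the role of `-ε`; see the Upwards Induction
Theorem for the meaning of the data. -/
theorem upwards_induction_corollary
    (K : ℤ → Type) (KQ V U : Bool → ℤ → Type)
    (K' : ℤ → Type) (KQ' V' U' : Bool → ℤ → Type)
    [∀ n, AddCommGroup (K n)] [∀ ε n, AddCommGroup (KQ ε n)]
    [∀ ε n, AddCommGroup (V ε n)] [∀ ε n, AddCommGroup (U ε n)]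
    [∀ n, AddCommGroup (K' n)] [∀ ε n, AddCommGroup (KQ' ε n)]
    [∀ ε n, AddCommGroup (V' ε n)] [∀ ε n, AddCommGroup (U' ε n)]
    (F : ∀ ε n, KQ ε n →+ K n) (H : ∀ ε n, K n →+ KQ ε n)
    (a : ∀ ε n, V ε n →+ KQ ε n) (d : ∀ ε n, K n →+ V ε (n - 1))
    (b : ∀ ε n, U ε n →+ K n) (e : ∀ ε n, KQ ε n →+ U ε (n - 1))
    (F' : ∀ ε n, KQ' ε n →+ K' n) (H' : ∀ ε n, K' n →+ KQ' ε n)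
    (a' : ∀ ε n, V' ε n →+ KQ' ε n) (d' : ∀ ε n, K' n →+ V' ε (n - 1))
    (b' : ∀ ε n, U' ε n →+ K' n) (e' : ∀ ε n, KQ' ε n →+ U' ε (n - 1))
    -- exactness of the two long sequences of the first system
    (exVKQ : ∀ ε n, Function.Exact ⇑(a ε n) ⇑(F ε n))
    (exVK : ∀ ε n, Function.Exact ⇑(F ε n) ⇑(d ε n))
    (exVV : ∀ ε n, Function.Exact ⇑(d ε n) ⇑(a ε (n - 1)))
    (exUK : ∀ ε n, Function.Exact ⇑(b ε n) ⇑(H ε n))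
    (exUKQ : ∀ ε n, Function.Exact ⇑(H ε n) ⇑(e ε n))
    (exUU : ∀ ε n, Function.Exact ⇑(e ε n) ⇑(b ε (n - 1)))
    -- exactness of the two long sequences of the second system
    (exVKQ' : ∀ ε n, Function.Exact ⇑(a' ε n) ⇑(F' ε n))
    (exVK' : ∀ ε n, Function.Exact ⇑(F' ε n) ⇑(d' ε n))
    (exVV' : ∀ ε n, Function.Exact ⇑(d' ε n) ⇑(a' ε (n - 1)))
    (exUK' : ∀ ε n, Function.Exact ⇑(b' ε n) ⇑(H' ε n))
    (exUKQ' : ∀ ε n, Function.Exact ⇑(H' ε n) ⇑(e' ε n))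
    (exUU' : ∀ ε n, Function.Exact ⇑(e' ε n) ⇑(b' ε (n - 1)))
    -- comparison maps, commuting with all structure maps
    (φK : ∀ n, K n →+ K' n) (φKQ : ∀ ε n, KQ ε n →+ KQ' ε n)
    (φV : ∀ ε n, V ε n →+ V' ε n) (φU : ∀ ε n, U ε n →+ U' ε n)
    (hφF : ∀ ε n x, φK n (F ε n x) = F' ε n (φKQ ε n x))
    (hφH : ∀ ε n x, φKQ ε n (H ε n x) = H' ε n (φK n x))
    (hφa : ∀ ε n x, φKQ ε n (a ε n x) = a' ε n (φV ε n x))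
    (hφd : ∀ ε n x, φV ε (n - 1) (d ε n x) = d' ε n (φK n x))
    (hφb : ∀ ε n x, φK n (b ε n x) = b' ε n (φU ε n x))
    (hφe : ∀ ε n x, φU ε (n - 1) (e ε n x) = e' ε n (φKQ ε n x))
    -- the Fundamental Theorem of Hermitian K-theory in both systems
    (ψ : ∀ ε n, V ε n ≃+ U (!ε) (n + 1))
    (ψ' : ∀ ε n, V' ε n ≃+ U' (!ε) (n + 1))
    (hψ : ∀ ε n x, φU (!ε) (n + 1) (ψ ε n x) = ψ' ε n (φV ε n x))
    -- hypotheses of the corollary, for a fixed `l`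
    (l : ℤ)
    (hKQl : ∀ ε, Function.Bijective (φKQ ε l))
    (hKQl1 : ∀ ε, Function.Bijective (φKQ ε (l + 1)))
    (hK : ∀ n : ℤ, l ≤ n → Function.Bijective (φK n)) :
    ∀ n : ℤ, l ≤ n → ∀ ε,
      Function.Bijective (φKQ ε n) ∧
      Function.Bijective (φV ε n) ∧
      Function.Bijective (φU ε n) := by
  let S : HermitianSystem not K KQ V U :=
    ⟨fun ε => ⟨a ε, F ε, d ε, exVKQ ε, exVK ε, exVV ε⟩,
      fun ε => ⟨b ε, H ε, e ε, exUK ε, exUKQ ε, exUU ε⟩, ψ⟩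
  let S' : HermitianSystem not K' KQ' V' U' :=
    ⟨fun ε => ⟨a' ε, F' ε, d' ε, exVKQ' ε, exVK' ε, exVV' ε⟩,
      fun ε => ⟨b' ε, H' ε, e' ε, exUK' ε, exUKQ' ε, exUU' ε⟩, ψ'⟩
  have comparison : S.IsHom S' φK φKQ φV φU :=
    { forgetful ε :=
        { comm_f n := AddMonoidHom.ext fun x => (hφa ε n x).symm
          comm_g n := AddMonoidHom.ext fun x => (hφF ε n x).symm
          comm_δ n := AddMonoidHom.ext fun x => (hφd ε n x).symm }
      hyperbolic ε :=
        { comm_f n := AddMonoidHom.ext fun x => (hφb ε n x).symm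
          comm_g n := AddMonoidHom.ext fun x => (hφH ε n x).symm
          comm_δ n := AddMonoidHom.ext fun x => (hφe ε n x).symm }
      fundamental := hψ }
  exact upwards_induction_corollary_general comparison Bool.involutive_not.surjective l
    hKQl hKQl1 hK
end
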